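/- Let σ be a permutation of length n > 1. Then σ is a king permutation if and only if br(σ) ≥ 3, where d_σ(i,j) = |i−j| + |σ(i)−σ(j)| and br(σ) = min over all pairs of distinct indices i,j ∈ {1,…,n} of d_σ(i,j). -/

import Mathlib

open Equiv

/-- The Manhattan distance between two elements of `Fin n`. -/
def fdist {n : ℕ} (a b : Fin n) : ℕ := ((a : ℤ) - (b : ℤ)).natAbs

/-- A king permutation: no two adjacent positions carry adjacent values. -/
def IsKing {n : ℕ} (σ : Equiv.Perm (Fin n)) : Prop :=
  ∀ i j : Fin n, (j : ℕ) = (i : ℕ) + 1 → fdist (σ i) (σ j) ≠ 1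

/-- Pattern containment `π ⪯ σ`. -/
def Contains {m n : ℕ} (π : Equiv.Perm (Fin m)) (σ : Equiv.Perm (Fin n)) : Prop :=
  ∃ f : Fin m ↪o Fin n, ∀ a b : Fin m, π a < π b ↔ σ (f a) < σ (f b)

/-- Strict pattern containment `π ≺ σ`. -/
def StrictContains {m n : ℕ} (π : Equiv.Perm (Fin m)) (σ : Equiv.Perm (Fin n)) : Prop :=
  Contains π σ ∧ m < n

/-- `nabla σ i` deletes the `i`-th entry of `σ` and standardizes. -/
def nabla {n : ℕ} (σ : Equiv.Perm (Fin (n + 1))) (i : Fin (n + 1)) : Equiv.Perm (Fin n) :=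
  Equiv.removeNone ((finSuccEquiv' i).symm.trans (σ.trans (finSuccEquiv' (σ i))))

/-- `nablaStar σ a` deletes the value `a` from `σ` and standardizes. -/
def nablaStar {n : ℕ} (σ : Equiv.Perm (Fin (n + 1))) (a : Fin (n + 1)) : Equiv.Perm (Fin n) :=
  nabla σ (σ⁻¹ a)

/-- The permutation [2413] (0-based one-line notation [1,3,0,2]). -/
def p2413 : Equiv.Perm (Fin 4) :=
  ⟨![1, 3, 0, 2], ![2, 0, 3, 1], by intro x; fin_cases x <;> rfl, by intro x; fin_cases x <;> rfl⟩

/-- The permutation [3142] (0-based one-line notation [2,0,3,1]). -/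
def p3142 : Equiv.Perm (Fin 4) :=
  ⟨![2, 0, 3, 1], ![1, 3, 0, 2], by intro x; fin_cases x <;> rfl, by intro x; fin_cases x <;> rfl⟩

/-- `σ i` vertically separates `σ j` from `σ k`. -/
def VSep {n : ℕ} (σ : Equiv.Perm (Fin n)) (i j k : Fin n) : Prop :=
  i ≠ j ∧ i ≠ k ∧ j ≠ k ∧ fdist i j = 1 ∧ fdist i k = 1 ∧ fdist (σ j) (σ k) = 1

/-- `σ i` horizontally separates `σ j` from `σ k`. -/
def HSep {n : ℕ} (σ : Equiv.Perm (Fin n)) (i j k : Fin n) : Prop :=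
  i ≠ j ∧ i ≠ k ∧ j ≠ k ∧ fdist (σ i) (σ j) = 1 ∧ fdist (σ i) (σ k) = 1 ∧ fdist j k = 1

/-- `σ i` separates `σ j` from `σ k`. -/
def Separates {n : ℕ} (σ : Equiv.Perm (Fin n)) (i j k : Fin n) : Prop :=
  VSep σ i j k ∨ HSep σ i j k

/-- `π` has a 2-block at positions `j`, `j+1` (0-based). -/
def HasTwoBlockAt {n : ℕ} (π : Equiv.Perm (Fin n)) (j : ℕ) : Prop :=
  ∃ hj : j + 1 < n, fdist (π ⟨j, by omega⟩) (π ⟨j + 1, hj⟩) = 1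

/-- `π` has a 3-block at positions `p`, `p+1`, `p+2` (0-based). -/
def HasThreeBlockAt {n : ℕ} (π : Equiv.Perm (Fin n)) (p : ℕ) : Prop :=
  ∃ hp : p + 2 < n, ∃ m : ℕ,
    ({(π ⟨p, by omega⟩ : ℕ), (π ⟨p + 1, by omega⟩ : ℕ), (π ⟨p + 2, by omega⟩ : ℕ)} : Finset ℕ)
      = {m, m + 1, m + 2}

/-- The breadth of `σ`: the minimum of `d_σ(i,j) = |i−j| + |σ(i)−σ(j)|` over all
pairs of distinct indices. -/
noncomputable def breadth {n : ℕ} (σ : Equiv.Perm (Fin n)) : ℕ :=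
  sInf {d : ℕ | ∃ i j : Fin n, i ≠ j ∧ d = fdist i j + fdist (σ i) (σ j)}

section fdist

variable {n : ℕ} {a b : Fin n}

theorem fdist_comm (a b : Fin n) : fdist a b = fdist b a := by
  rw [fdist, fdist, ← Int.natAbs_neg, neg_sub]

theorem fdist_eq_zero_iff : fdist a b = 0 ↔ a = b := by
  simp only [fdist, Int.natAbs_eq_zero, sub_eq_zero, Nat.cast_inj, Fin.val_inj]

theorem fdist_pos_iff : 0 < fdist a b ↔ a ≠ b := by
  rw [Nat.pos_iff_ne_zero, Ne, fdist_eq_zero_iff]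

theorem fdist_eq_one_iff : fdist a b = 1 ↔ (b : ℕ) = a + 1 ∨ (a : ℕ) = b + 1 := by
  unfold fdist
  omega

theorem three_le_fdist_add_fdist_iff {m : ℕ} {c d : Fin m} (hab : a ≠ b) (hcd : c ≠ d) :
    3 ≤ fdist a b + fdist c d ↔ fdist a b = 1 → fdist c d ≠ 1 := by
  have hab_pos : 0 < fdist a b := fdist_pos_iff.2 hab
  have hcd_pos : 0 < fdist c d := fdist_pos_iff.2 hcd
  omega

end fdist

section Perm

variable {n : ℕ} {σ : Perm (Fin n)}

theorem isKing_iff_forall_fdist_eq_one :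
    IsKing σ ↔ ∀ i j, fdist i j = 1 → fdist (σ i) (σ j) ≠ 1 := by
  refine ⟨fun hσ i j hij ↦ ?_, fun h i j hij ↦ h i j (fdist_eq_one_iff.2 (.inl hij))⟩
  rcases fdist_eq_one_iff.1 hij with hj | hi
  · exact hσ i j hj
  · rw [fdist_comm]
    exact hσ j i hi

theorem breadth_le {i j : Fin n} (hij : i ≠ j) :
    breadth σ ≤ fdist i j + fdist (σ i) (σ j) :=
  Nat.sInf_le ⟨i, j, hij, rfl⟩

theorem le_breadth_iff (hn : 1 < n) {k : ℕ} :
    k ≤ breadth σ ↔ ∀ i j, i ≠ j → k ≤ fdist i j + fdist (σ i) (σ j) := by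
  refine ⟨fun hk i j hij ↦ hk.trans (breadth_le hij), fun h ↦ ?_⟩
  have : Nontrivial (Fin n) := Fin.nontrivial_iff_two_le.2 hn
  obtain ⟨i₀, j₀, h₀⟩ := exists_pair_ne (Fin n)
  refine le_csInf ⟨_, i₀, j₀, h₀, rfl⟩ ?_
  rintro _ ⟨i, j, hij, rfl⟩
  exact h i j hij

end Perm

/-- a permutation of length `n > 1` is a king iff its breadth is at
least `3`. -/
theorem isKing_iff_breadth_ge_three (n : ℕ) (hn : 1 < n) (σ : Equiv.Perm (Fin n)) :
    IsKing σ ↔ 3 ≤ breadth σ := by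
  rw [isKing_iff_forall_fdist_eq_one, le_breadth_iff hn]
  constructor
  · intro hσ i j hij
    exact (three_le_fdist_add_fdist_iff hij (σ.injective.ne hij)).2 (hσ i j)
  · intro hσ i j h_one
    have hij : i ≠ j := fdist_pos_iff.1 (by rw [h_one]; exact one_pos)
    exact (three_le_fdist_add_fdist_iff hij (σ.injective.ne hij)).1 (hσ i j hij) h_one
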